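/- Let L be any g-symmetric endomorphism of V. Then there exists a formal curvature tensor R on V, all of whose values lie in 𝔤_L, such that the values {R(u,v) : u, v ∈ V} span 𝔤_L as a vector space. Consequently, 𝔤_L is a Berger algebra. -/

import Mathlib

/-- A formal curvature tensor on `V`: an alternating bilinear map
`R : V × V → End(V)` satisfying the Bianchi identity. -/
def IsFormalCurvature {V : Type*} [AddCommGroup V] [Module ℝ V]
    (R : V → V → Module.End ℝ V) : Prop :=
  (∀ u u' v : V, R (u + u') v = R u v + R u' v) ∧
  (∀ (c : ℝ) (u v : V), R (c • u) v = c • R u v) ∧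
  (∀ u v v' : V, R u (v + v') = R u v + R u v') ∧
  (∀ (c : ℝ) (u v : V), R u (c • v) = c • R u v) ∧
  (∀ u : V, R u u = 0) ∧
  (∀ u v w : V, R u v w + R v w u + R w u v = 0)

/-- A set `h ⊆ End(V)` (e.g. a Lie subalgebra) is a Berger algebra if it is spanned,
as a vector space, by the values of all formal curvature tensors whose values lie
in `h`. -/
def IsBerger {V : Type*} [AddCommGroup V] [Module ℝ V]
    (h : Set (Module.End ℝ V)) : Prop :=
  (Submodule.span ℝ {A : Module.End ℝ V |
      ∃ R, IsFormalCurvature R ∧ (∀ u v, R u v ∈ h) ∧ ∃ u v, R u v = A} :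
    Set (Module.End ℝ V)) = h

/-!
Let `𝒜 = K[L]`, a commutative algebra of self-adjoint operators. Given an `𝒜`-linear map
`τ : V → 𝒜`, put `u ∧ v = τ(u) v - τ(v) u`. Then `g(R(u, v) w, y) = g(u ∧ v, w ∧ y)` defines a
curvature tensor with values in `𝔤_L`.

A vector `e` can be chosen such that `g` is nondegenerate on `𝒜 e` and `τ` can be chosen such that
`Q v = τ(v) e` is the orthogonal projection onto `𝒜 e`, with kernel `ker τ`. For `Y ∈ 𝔤_L` one
finds `R(e, Y e) = Y Q + Q Y`, while `Q Y Q = 0` because `Y` is skew and `𝒜` is self-adjoint. Hence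
`Y - R(e, Y e) = (1 - Q) Y (1 - Q)` lives on the orthogonal complement `ker τ` of `𝒜 e`, on which
`R` vanishes, and one concludes by induction on the dimension.
-/

open Module

section CurvatureTensor

variable {K V W : Type*} [CommRing K] [AddCommGroup V] [Module K V] [AddCommGroup W] [Module K W]

/-- Formal curvature tensors over an arbitrary commutative ring, as bundled bilinear maps. Over `ℝ`
this is `IsFormalCurvature`. -/
structure IsCurvatureTensor (R : V →ₗ[K] V →ₗ[K] End K V) : Prop where
  isAlt : R.IsAlt
  bianchi : ∀ u v w, R u v w + R v w u + R w u v = 0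

/-- The linear map `A ↦ ι A π` from endomorphisms of `W` to endomorphisms of `V`. -/
def sandwich (ι : W →ₗ[K] V) (π : V →ₗ[K] W) : End K W →ₗ[K] End K V :=
  LinearMap.lcomp K V π ∘ₗ LinearMap.compRight K ι

@[simp]
theorem sandwich_apply (ι : W →ₗ[K] V) (π : V →ₗ[K] W) (A : End K W) (x : V) :
    sandwich ι π A x = ι (A (π x)) :=
  rfl

/-- Transport of a tensor `R : W × W → End W` to `V` along `ι : W → V` and `π : V → W`;
when `W` is an orthogonal summand of `V` this is extension by zero. -/
def sandwichTensor (ι : W →ₗ[K] V) (π : V →ₗ[K] W) (R : W →ₗ[K] W →ₗ[K] End K W) :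
    V →ₗ[K] V →ₗ[K] End K V :=
  (R.compl₁₂ π π).compr₂ (sandwich ι π)

@[simp]
theorem sandwichTensor_apply (ι : W →ₗ[K] V) (π : V →ₗ[K] W)
    (R : W →ₗ[K] W →ₗ[K] End K W) (u v : V) :
    sandwichTensor ι π R u v = sandwich ι π (R (π u) (π v)) :=
  rfl

namespace IsCurvatureTensor

theorem zero : IsCurvatureTensor (0 : V →ₗ[K] V →ₗ[K] End K V) where
  isAlt _ := rfl
  bianchi _ _ _ := by simp

theorem add {R S : V →ₗ[K] V →ₗ[K] End K V} (hR : IsCurvatureTensor R)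
    (hS : IsCurvatureTensor S) : IsCurvatureTensor (R + S) where
  isAlt u := by simp [hR.isAlt u, hS.isAlt u]
  bianchi u v w := by
    calc (R + S) u v w + (R + S) v w u + (R + S) w u v
        = (R u v w + R v w u + R w u v) + (S u v w + S v w u + S w u v) := by
          simp only [LinearMap.add_apply]; abel
      _ = 0 := by rw [hR.bianchi, hS.bianchi, add_zero]

theorem sandwichTensor {R : W →ₗ[K] W →ₗ[K] End K W} (hR : IsCurvatureTensor R)
    (ι : W →ₗ[K] V) (π : V →ₗ[K] W) : IsCurvatureTensor (sandwichTensor ι π R) where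
  isAlt u := by simp [hR.isAlt (π u)]
  bianchi u v w := by simp [← map_add, hR.bianchi]

end IsCurvatureTensor

theorem IsCurvatureTensor.isFormalCurvature {V : Type*} [AddCommGroup V] [Module ℝ V]
    {R : V →ₗ[ℝ] V →ₗ[ℝ] End ℝ V} (hR : IsCurvatureTensor R) :
    IsFormalCurvature fun u v ↦ R u v :=
  ⟨R.map_add₂, R.map_smul₂, fun u ↦ map_add (R u), fun c u ↦ map_smul (R u) c, hR.isAlt, hR.bianchi⟩

theorem IsFormalCurvature.isBerger_span {V : Type*} [AddCommGroup V] [Module ℝ V]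
    {R : V → V → End ℝ V} (hR : IsFormalCurvature R) :
    IsBerger (Submodule.span ℝ {A | ∃ u v, R u v = A} : Set (End ℝ V)) := by
  refine congrArg _ (le_antisymm (Submodule.span_le.2 ?_) (Submodule.span_mono fun A hA ↦ ?_))
  · rintro _ ⟨S, _, hS, u, v, rfl⟩
    exact hS u v
  · exact ⟨R, hR, fun u v ↦ Submodule.subset_span ⟨u, v, rfl⟩, hA⟩

end CurvatureTensor

section SkewCentralizer

variable {K V W : Type*} [CommRing K] [AddCommGroup V] [Module K V] [AddCommGroup W] [Module K W]
  {g : LinearMap.BilinForm K V} {gW : LinearMap.BilinForm K W} {L : End K V} {M : End K W}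

/-- The space `𝔤_L` of `g`-skew-symmetric endomorphisms commuting with `L`. -/
def skewCentralizer (g : LinearMap.BilinForm K V) (L : End K V) : Submodule K (End K V) :=
  g.skewAdjointSubmodule ⊓ (Subalgebra.centralizer K {L}).toSubmodule

theorem mem_skewCentralizer {X : End K V} :
    X ∈ skewCentralizer g L ↔ (∀ x y, g (X x) y = -g x (X y)) ∧ X * L = L * X := by
  simp [skewCentralizer, LinearMap.IsSkewAdjoint, LinearMap.IsAdjointPair,
    Subalgebra.mem_centralizer_iff, eq_comm]

theorem sandwich_mem_skewCentralizer {ι : W →ₗ[K] V} {π : V →ₗ[K] W}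
    (hιπ : LinearMap.IsAdjointPair gW g ι π) (hπι : LinearMap.IsAdjointPair g gW π ι)
    (hι : ι ∘ₗ M = L ∘ₗ ι) (hπ : π ∘ₗ L = M ∘ₗ π) {A : End K W}
    (hA : A ∈ skewCentralizer gW M) : sandwich ι π A ∈ skewCentralizer g L := by
  obtain ⟨hskew, hcomm⟩ := mem_skewCentralizer.1 hA
  refine mem_skewCentralizer.2 ⟨fun x y ↦ ?_, LinearMap.ext fun x ↦ ?_⟩
  · rw [sandwich_apply, sandwich_apply, hιπ, hskew, hπι]
  · have hπx : π (L x) = M (π x) := LinearMap.congr_fun hπ x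
    have hιx : ι (M (A (π x))) = L (ι (A (π x))) := LinearMap.congr_fun hι _
    have hAx : A (M (π x)) = M (A (π x)) := LinearMap.congr_fun hcomm _
    simp only [Module.End.mul_apply, sandwich_apply, hπx, hAx, hιx]

end SkewCentralizer

section Adjoin

variable {K V : Type*} [CommRing K] [AddCommGroup V] [Module K V] {g : LinearMap.BilinForm K V}
  {L A B : End K V}

theorem commute_of_mem_adjoin_singleton (hA : A ∈ Algebra.adjoin K {L})
    (hB : B ∈ Algebra.adjoin K {L}) : Commute A B :=
  Algebra.commute_of_mem_adjoin_singleton_of_commute hB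
    (Algebra.commute_of_mem_adjoin_self hA).symm

theorem isSelfAdjoint_of_mem_adjoin (hL : g.IsSelfAdjoint L) (hA : A ∈ Algebra.adjoin K {L}) :
    g.IsSelfAdjoint A := by
  induction hA using Algebra.adjoin_induction with
  | mem B hB => rwa [Set.mem_singleton_iff.1 hB]
  | algebraMap c => intro x y; simp
  | add B C _ _ hB hC => exact hB.add hC
  | mul B C hBmem hCmem hB hC =>
    have hadj := hB.mul hC
    rwa [(commute_of_mem_adjoin_singleton hCmem hBmem).eq] at hadj

end Adjoin

theorem eq_of_forall_apply_eq {K V : Type*} [CommRing K] [AddCommGroup V] [Module K V]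
    {g : LinearMap.BilinForm K V} (hg : g.Nondegenerate) {x y : V}
    (h : ∀ z, g x z = g y z) : x = y :=
  LinearMap.ker_eq_bot.1 hg.ker_eq_bot (LinearMap.ext h)

section PairingCurvature

variable {K V : Type*} [Field K] [AddCommGroup V] [Module K V] [FiniteDimensional K V]
  {g : LinearMap.BilinForm K V} {L : End K V}

/-- The tensor `R` with `g(R(u, v) w, y) = g(ω(u, v), ω(w, y))`. -/
noncomputable def pairingTensor (hg : g.Nondegenerate) (ω : V →ₗ[K] V →ₗ[K] V) :
    V →ₗ[K] V →ₗ[K] End K V :=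
  ω.compr₂ (((LinearMap.llcomp K V V K ∘ₗ g).compl₂ ω).compr₂ (g.toDual hg).symm.toLinearMap)

theorem apply_pairingTensor (hg : g.Nondegenerate) (ω : V →ₗ[K] V →ₗ[K] V) (u v w y : V) :
    g (pairingTensor hg ω u v w) y = g (ω u v) (ω w y) := by
  simp [pairingTensor]

theorem pairingTensor_mem_skewCentralizer (hs : g.IsSymm) (hg : g.Nondegenerate)
    (hL : g.IsSelfAdjoint L) {ω : V →ₗ[K] V →ₗ[K] V} (hω : ω.IsAlt)
    (hωL : ∀ u v, ω (L u) v = L (ω u v)) (u v : V) :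
    pairingTensor hg ω u v ∈ skewCentralizer g L := by
  have hωL_right : ∀ w y, ω w (L y) = L (ω w y) := fun w y ↦ by
    rw [← hω.neg, hωL, ← map_neg, hω.neg]
  refine mem_skewCentralizer.2
    ⟨fun x y ↦ ?_, LinearMap.ext fun x ↦ eq_of_forall_apply_eq hg fun y ↦ ?_⟩
  · rw [hs.eq x, apply_pairingTensor, apply_pairingTensor, ← hω.neg x y, map_neg, neg_neg]
  · rw [Module.End.mul_apply, Module.End.mul_apply, hL, apply_pairingTensor, apply_pairingTensor,
      hωL, hωL_right]

/-- The alternating product `u ∧ v = τ(u) v - τ(v) u`. -/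
def wedge {K V : Type*} [CommRing K] [AddCommGroup V] [Module K V] (τ : V →ₗ[K] End K V) :
    V →ₗ[K] V →ₗ[K] V :=
  τ - LinearMap.flip τ

theorem wedge_apply {K V : Type*} [CommRing K] [AddCommGroup V] [Module K V]
    (τ : V →ₗ[K] End K V) (u v : V) : wedge τ u v = τ u v - τ v u :=
  rfl

theorem isCurvatureTensor_pairingTensor_wedge (hs : g.IsSymm) (hg : g.Nondegenerate)
    {τ : V →ₗ[K] End K V} (hτ : ∀ u, g.IsSelfAdjoint (τ u)) (hcomm : ∀ u v, Commute (τ u) (τ v)) :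
    IsCurvatureTensor (pairingTensor hg (wedge τ)) where
  isAlt u := LinearMap.ext fun w ↦ eq_of_forall_apply_eq hg fun y ↦ by
    simp [apply_pairingTensor, wedge_apply]
  bianchi u v w := eq_of_forall_apply_eq hg fun y ↦ by
    have swap (a b c d : V) : g (τ a b) (τ c d) = g (τ c b) (τ a d) := by
      rw [← hτ c, ← hτ a, ← Module.End.mul_apply, (hcomm c a).eq, Module.End.mul_apply]
    have swap' (a b c : V) : g (τ a b) (τ y c) = g (τ a c) (τ y b) := by rw [swap, hs.eq]
    simp only [map_add, LinearMap.add_apply, apply_pairingTensor, wedge_apply, map_sub,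
      LinearMap.sub_apply, map_zero, LinearMap.zero_apply]
    linear_combination swap u v w y + swap v w u y + swap w u v y
      - swap' u v w - swap' v w u - swap' w u v

theorem pairingTensor_wedge_eq_zero (hg : g.Nondegenerate) {τ : V →ₗ[K] End K V} {u v : V}
    (hu : u ∈ LinearMap.ker τ) (hv : v ∈ LinearMap.ker τ) :
    pairingTensor hg (wedge τ) u v = 0 := by
  have hwedge : wedge τ u v = 0 := by
    simp [wedge_apply, LinearMap.mem_ker.1 hu, LinearMap.mem_ker.1 hv]
  refine LinearMap.ext fun w ↦ eq_of_forall_apply_eq hg fun y ↦ ?_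
  simp [apply_pairingTensor, hwedge]

end PairingCurvature

section CyclicSplitting

variable {K V : Type*} [Field K] [AddCommGroup V] [Module K V]
  {g : LinearMap.BilinForm K V} {L Y : End K V} {e : V} {τ : V →ₗ[K] End K V}

theorem apply_skew_apply_eq_zero [NeZero (2 : K)] (hs : g.IsSymm) (hL : g.IsSelfAdjoint L)
    (hY : Y ∈ skewCentralizer g L) {A : End K V} (hA : A ∈ Algebra.adjoin K {L}) (e : V) :
    g (Y e) (A e) = 0 := by
  obtain ⟨hskew, hcomm⟩ := mem_skewCentralizer.1 hY
  have hYA : Y (A e) = A (Y e) :=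
    LinearMap.congr_fun (Algebra.commute_of_mem_adjoin_singleton_of_commute hA hcomm).eq e
  have hneg : g (Y e) (A e) = -g (Y e) (A e) :=
    calc g (Y e) (A e) = -g e (A (Y e)) := by rw [hskew, hYA]
      _ = -g (Y e) (A e) := by rw [← isSelfAdjoint_of_mem_adjoin hL hA, hs.eq]
  exact mul_left_cancel₀ (two_ne_zero (α := K)) (by linear_combination hneg)

/-- The data of a cyclic orthogonal summand `K[L] e` of `V`: the map `τ : V → K[L]` is `K[L]`-linear
and `v ↦ τ(v) e`, that is `LinearMap.flip τ e`, is the orthogonal projection onto `K[L] e`. -/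
structure IsCyclicSplitting (g : LinearMap.BilinForm K V) (L : End K V) (e : V)
    (τ : V →ₗ[K] End K V) : Prop where
  mem_adjoin : ∀ v, τ v ∈ Algebra.adjoin K {L}
  map_apply : ∀ v, τ (L v) = L * τ v
  isSelfAdjoint : g.IsSelfAdjoint (LinearMap.flip τ e)
  apply_self : τ e e = e
  mul_map_self : ∀ v, τ v * τ e = τ v

namespace IsCyclicSplitting

theorem map_apply_of_mem_adjoin (h : IsCyclicSplitting g L e τ) {A : End K V}
    (hA : A ∈ Algebra.adjoin K {L}) (v : V) : τ (A v) = A * τ v := by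
  induction hA using Algebra.adjoin_induction generalizing v with
  | mem B hB => rw [Set.mem_singleton_iff.1 hB, h.map_apply]
  | algebraMap c => simp [Algebra.algebraMap_eq_smul_one]
  | add B C _ _ hB hC => rw [LinearMap.add_apply, map_add, hB, hC, add_mul]
  | mul B C _ _ hB hC => rw [Module.End.mul_apply, hB, hC, mul_assoc]

theorem map_proj (h : IsCyclicSplitting g L e τ) (v : V) : τ (τ v e) = τ v := by
  rw [h.map_apply_of_mem_adjoin (h.mem_adjoin v), h.mul_map_self]

theorem map_skew_apply [NeZero (2 : K)] (h : IsCyclicSplitting g L e τ) (hs : g.IsSymm)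
    (hg : g.Nondegenerate) (hL : g.IsSelfAdjoint L) (hY : Y ∈ skewCentralizer g L) :
    τ (Y e) = 0 := by
  have hproj : τ (Y e) e = 0 := eq_of_forall_apply_eq hg fun v ↦ by
    calc g (τ (Y e) e) v = g (Y e) (τ v e) := h.isSelfAdjoint (Y e) v
      _ = g 0 v := by
        rw [apply_skew_apply_eq_zero hs hL hY (h.mem_adjoin v), map_zero, LinearMap.zero_apply]
  rw [← h.map_proj, hproj, map_zero]

theorem pairingTensor_skew_apply [NeZero (2 : K)] [FiniteDimensional K V]
    (h : IsCyclicSplitting g L e τ) (hs : g.IsSymm) (hg : g.Nondegenerate)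
    (hL : g.IsSelfAdjoint L) (hY : Y ∈ skewCentralizer g L) :
    pairingTensor hg (wedge τ) e (Y e) = Y * LinearMap.flip τ e + LinearMap.flip τ e * Y := by
  obtain ⟨hskew, hcomm⟩ := mem_skewCentralizer.1 hY
  have hτY (w x : V) : τ w (Y x) = Y (τ w x) := (LinearMap.congr_fun
    (Algebra.commute_of_mem_adjoin_singleton_of_commute (h.mem_adjoin w) hcomm).eq x).symm
  have hwedge : wedge τ e (Y e) = Y e := by
    rw [wedge_apply, h.map_skew_apply hs hg hL hY, hτY, h.apply_self, LinearMap.zero_apply,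
      sub_zero]
  have hpair (w y : V) : g (Y e) (τ w y) = g (Y (τ w e)) y := by
    rw [← hτY, isSelfAdjoint_of_mem_adjoin hL (h.mem_adjoin w)]
  refine LinearMap.ext fun w ↦ eq_of_forall_apply_eq hg fun y ↦ ?_
  calc g (pairingTensor hg (wedge τ) e (Y e) w) y
      = g (Y (τ w e)) y - g (Y (τ y e)) w := by
        rw [apply_pairingTensor, hwedge, wedge_apply, map_sub, hpair, hpair]
    _ = g (Y (τ w e)) y + g (Y w) (τ y e) := by rw [hskew (τ y e), hs.eq (τ y e), sub_neg_eq_add]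
    _ = g (Y (τ w e)) y + g (τ (Y w) e) y := congrArg _ (h.isSelfAdjoint (Y w) y).symm
    _ = g ((Y * LinearMap.flip τ e + LinearMap.flip τ e * Y) w) y := by simp

theorem mapsTo_ker (h : IsCyclicSplitting g L e τ) :
    ∀ x ∈ LinearMap.ker τ, L x ∈ LinearMap.ker τ := fun x hx ↦ by
  rw [LinearMap.mem_ker] at hx ⊢
  rw [h.map_apply, hx, mul_zero]

theorem apply_proj_of_mem_ker (h : IsCyclicSplitting g L e τ) {x : V}
    (hx : x ∈ LinearMap.ker τ) (y : V) : g x (τ y e) = 0 := by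
  calc g x (τ y e) = g (τ x e) y := (h.isSelfAdjoint x y).symm
    _ = 0 := by simp [LinearMap.mem_ker.1 hx]

/-- The orthogonal projection `v ↦ v - τ(v) e` onto the complement `ker τ` of `K[L] e`. -/
def kerProj (h : IsCyclicSplitting g L e τ) : V →ₗ[K] LinearMap.ker τ :=
  (1 - LinearMap.flip τ e).codRestrict (LinearMap.ker τ) fun v ↦ by simp [h.map_proj v]

theorem coe_kerProj (h : IsCyclicSplitting g L e τ) (v : V) : (h.kerProj v : V) = v - τ v e :=
  rfl

theorem kerProj_self (h : IsCyclicSplitting g L e τ) : h.kerProj e = 0 :=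
  Subtype.ext <| by rw [coe_kerProj, h.apply_self, sub_self, ZeroMemClass.coe_zero]

theorem isAdjointPair_subtype_kerProj (h : IsCyclicSplitting g L e τ) :
    LinearMap.IsAdjointPair (g.restrict (LinearMap.ker τ)) g (LinearMap.ker τ).subtype h.kerProj :=
  fun x y ↦ by
    simp [LinearMap.BilinForm.restrict_apply, coe_kerProj, h.apply_proj_of_mem_ker x.2]

theorem isAdjointPair_kerProj_subtype (h : IsCyclicSplitting g L e τ) (hs : g.IsSymm) :
    LinearMap.IsAdjointPair g (g.restrict (LinearMap.ker τ)) h.kerProj (LinearMap.ker τ).subtype :=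
  fun x y ↦ by
    rw [(hs.restrict _).eq, ← h.isAdjointPair_subtype_kerProj, hs.eq]

theorem nondegenerate_restrict_ker (h : IsCyclicSplitting g L e τ) (hs : g.IsSymm)
    (hg : g.Nondegenerate) : (g.restrict (LinearMap.ker τ)).Nondegenerate := by
  refine (LinearMap.IsRefl.nondegenerate_iff_separatingLeft (hs.restrict _).isRefl).2
    fun x hx ↦ Subtype.ext <| eq_of_forall_apply_eq hg fun y ↦ ?_
  calc g x y = g.restrict (LinearMap.ker τ) x (h.kerProj y) := h.isAdjointPair_subtype_kerProj x y
    _ = g (0 : LinearMap.ker τ) y := by rw [hx]; simp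

theorem finrank_ker_lt [FiniteDimensional K V] (h : IsCyclicSplitting g L e τ) (he : e ≠ 0) :
    finrank K (LinearMap.ker τ) < finrank K V :=
  Submodule.finrank_lt fun htop ↦ he <| by
    have hτe : τ e = 0 := LinearMap.mem_ker.1 (htop ▸ Submodule.mem_top)
    rw [← h.apply_self, hτe, LinearMap.zero_apply]

theorem kerProj_comp (h : IsCyclicSplitting g L e τ) :
    h.kerProj ∘ₗ L = L.restrict h.mapsTo_ker ∘ₗ h.kerProj :=
  LinearMap.ext fun v ↦ Subtype.ext <| by simp [coe_kerProj, h.map_apply]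

theorem sandwich_kerProj_mem_skewCentralizer (h : IsCyclicSplitting g L e τ) (hs : g.IsSymm)
    (hY : Y ∈ skewCentralizer g L) :
    sandwich h.kerProj (LinearMap.ker τ).subtype Y ∈
      skewCentralizer (g.restrict (LinearMap.ker τ)) (L.restrict h.mapsTo_ker) :=
  sandwich_mem_skewCentralizer (h.isAdjointPair_kerProj_subtype hs)
    h.isAdjointPair_subtype_kerProj h.kerProj_comp rfl hY

theorem sandwich_subtype_mem_skewCentralizer (h : IsCyclicSplitting g L e τ) (hs : g.IsSymm)
    {A : End K (LinearMap.ker τ)}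
    (hA : A ∈ skewCentralizer (g.restrict (LinearMap.ker τ)) (L.restrict h.mapsTo_ker)) :
    sandwich (LinearMap.ker τ).subtype h.kerProj A ∈ skewCentralizer g L :=
  sandwich_mem_skewCentralizer h.isAdjointPair_subtype_kerProj
    (h.isAdjointPair_kerProj_subtype hs) rfl h.kerProj_comp hA

theorem skew_eq_pairingTensor_add_sandwich [NeZero (2 : K)] [FiniteDimensional K V]
    (h : IsCyclicSplitting g L e τ) (hs : g.IsSymm) (hg : g.Nondegenerate)
    (hL : g.IsSelfAdjoint L) (hY : Y ∈ skewCentralizer g L) :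
    Y = pairingTensor hg (wedge τ) e (Y e) + sandwich (LinearMap.ker τ).subtype h.kerProj
      (sandwich h.kerProj (LinearMap.ker τ).subtype Y) := by
  have hQYQ (x : V) : τ (Y (τ x e)) e = 0 := by
    have hYτ : Y (τ x e) = τ x (Y e) := LinearMap.congr_fun
      (Algebra.commute_of_mem_adjoin_singleton_of_commute (h.mem_adjoin x)
        (mem_skewCentralizer.1 hY).2).eq e
    rw [hYτ, h.map_apply_of_mem_adjoin (h.mem_adjoin x), h.map_skew_apply hs hg hL hY, mul_zero,
      LinearMap.zero_apply]
  rw [h.pairingTensor_skew_apply hs hg hL hY]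
  ext x
  simp only [LinearMap.add_apply, Module.End.mul_apply, LinearMap.flip_apply, sandwich_apply,
    Submodule.subtype_apply, coe_kerProj, map_sub, hQYQ]
  abel

variable [FiniteDimensional K V]

/-- The curvature tensor on `V` assembled from the pairing tensor of `τ` and a tensor on the
orthogonal complement `ker τ` of `K[L] e`. -/
noncomputable def extendTensor (h : IsCyclicSplitting g L e τ) (hg : g.Nondegenerate)
    (R : LinearMap.ker τ →ₗ[K] LinearMap.ker τ →ₗ[K] End K (LinearMap.ker τ)) :
    V →ₗ[K] V →ₗ[K] End K V :=
  pairingTensor hg (wedge τ) + sandwichTensor (LinearMap.ker τ).subtype h.kerProj R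

theorem isCurvatureTensor_extendTensor (h : IsCyclicSplitting g L e τ) (hs : g.IsSymm)
    (hg : g.Nondegenerate) (hL : g.IsSelfAdjoint L)
    {R : LinearMap.ker τ →ₗ[K] LinearMap.ker τ →ₗ[K] End K (LinearMap.ker τ)}
    (hR : IsCurvatureTensor R) : IsCurvatureTensor (h.extendTensor hg R) :=
  (isCurvatureTensor_pairingTensor_wedge hs hg
    (fun u ↦ isSelfAdjoint_of_mem_adjoin hL (h.mem_adjoin u))
    fun u v ↦ commute_of_mem_adjoin_singleton (h.mem_adjoin u) (h.mem_adjoin v)).add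
    (hR.sandwichTensor _ _)

theorem extendTensor_mem_skewCentralizer (h : IsCyclicSplitting g L e τ) (hs : g.IsSymm)
    (hg : g.Nondegenerate) (hL : g.IsSelfAdjoint L)
    {R : LinearMap.ker τ →ₗ[K] LinearMap.ker τ →ₗ[K] End K (LinearMap.ker τ)}
    (hR : ∀ u v, R u v ∈
      skewCentralizer (g.restrict (LinearMap.ker τ)) (L.restrict h.mapsTo_ker)) (u v : V) :
    h.extendTensor hg R u v ∈ skewCentralizer g L := by
  have hτL (w y : V) : τ y (L w) = L (τ y w) :=
    (LinearMap.congr_fun (Algebra.commute_of_mem_adjoin_self (h.mem_adjoin y)).eq w).symm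
  refine add_mem (pairingTensor_mem_skewCentralizer hs hg hL (fun w ↦ ?_) (fun w y ↦ ?_) u v)
    (h.sandwich_subtype_mem_skewCentralizer hs (hR _ _))
  · simp [wedge_apply]
  · simp [wedge_apply, h.map_apply, hτL]

theorem extendTensor_coe (h : IsCyclicSplitting g L e τ) (hg : g.Nondegenerate)
    (R : LinearMap.ker τ →ₗ[K] LinearMap.ker τ →ₗ[K] End K (LinearMap.ker τ))
    (u v : LinearMap.ker τ) :
    h.extendTensor hg R u v = sandwich (LinearMap.ker τ).subtype h.kerProj (R u v) := by
  have hproj (x : LinearMap.ker τ) : h.kerProj x = x := Subtype.ext <| by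
    simp [coe_kerProj, LinearMap.mem_ker.1 x.2]
  simp [extendTensor, pairingTensor_wedge_eq_zero hg u.2 v.2, hproj]

theorem extendTensor_self (h : IsCyclicSplitting g L e τ) (hg : g.Nondegenerate)
    (R : LinearMap.ker τ →ₗ[K] LinearMap.ker τ →ₗ[K] End K (LinearMap.ker τ)) (v : V) :
    h.extendTensor hg R e v = pairingTensor hg (wedge τ) e v := by
  simp [extendTensor, h.kerProj_self]

theorem skewCentralizer_le_span_extendTensor [NeZero (2 : K)] (h : IsCyclicSplitting g L e τ)
    (hs : g.IsSymm) (hg : g.Nondegenerate) (hL : g.IsSelfAdjoint L)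
    {R : LinearMap.ker τ →ₗ[K] LinearMap.ker τ →ₗ[K] End K (LinearMap.ker τ)}
    (hR : skewCentralizer (g.restrict (LinearMap.ker τ)) (L.restrict h.mapsTo_ker) ≤
      Submodule.span K {A | ∃ u v, R u v = A}) :
    skewCentralizer g L ≤ Submodule.span K {A | ∃ u v, h.extendTensor hg R u v = A} := by
  intro Y hY
  rw [h.skew_eq_pairingTensor_add_sandwich hs hg hL hY, ← h.extendTensor_self hg R]
  refine add_mem (Submodule.subset_span ⟨e, Y e, rfl⟩) ?_
  refine (Submodule.map_span_le (sandwich (LinearMap.ker τ).subtype h.kerProj) _ _).2 ?_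
    (Submodule.mem_map_of_mem (hR (h.sandwich_kerProj_mem_skewCentralizer hs hY)))
  rintro _ ⟨u, v, rfl⟩
  exact Submodule.subset_span ⟨u, v, h.extendTensor_coe hg R u v⟩

end IsCyclicSplitting
end CyclicSplitting

section Existence

open Polynomial

theorem exists_irreducible_pow_dvd_and_idempotent {R : Type*} [CommRing R] [IsDomain R]
    [IsPrincipalIdealRing R] {f : R} (hf : f ≠ 0) (hu : ¬IsUnit f) :
    ∃ (q ε : R) (n : ℕ), Irreducible q ∧ q ^ (n + 1) ∣ f ∧ f ∣ q ^ (n + 1) * ε ∧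
      q ^ (n + 1) ∣ 1 - ε := by
  obtain ⟨q, hq, hqf⟩ := WfDvdMonoid.exists_irreducible_factor hu hf
  obtain ⟨k, m, hqm, rfl⟩ := WfDvdMonoid.max_power_factor hf hq
  obtain _ | n := k
  · exact absurd (by simpa using hqf) hqm
  obtain ⟨a, b, hab⟩ := ((hq.coprime_iff_not_dvd).2 hqm).pow_left (m := n + 1)
  exact ⟨q, b * m, n, hq, dvd_mul_right _ _, ⟨b, by ring⟩, ⟨a, by linear_combination -hab⟩⟩

theorem exists_mul_add_mul_pow_succ_eq_pow {R : Type*} [CommRing R] [IsDomain R]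
    [IsPrincipalIdealRing R] {q b : R} {n : ℕ} (hq : Irreducible q) (hb : ¬q ^ (n + 1) ∣ b) :
    ∃ c d, c * b + d * q ^ (n + 1) = q ^ n := by
  obtain ⟨d, hd⟩ := IsPrincipalIdealRing.principal (Ideal.span {b, q ^ (n + 1)})
  rw [Ideal.submodule_span_eq] at hd
  have hdvd {x : R} (hx : x ∈ ({b, q ^ (n + 1)} : Set R)) : d ∣ x :=
    Ideal.mem_span_singleton.1 (hd ▸ Ideal.subset_span hx)
  obtain ⟨i, _, hdi⟩ := (dvd_prime_pow hq.prime _).1 (hdvd (Or.inr rfl))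
  have hin : i ≤ n := by
    by_contra! hlt
    exact hb (((pow_dvd_pow q hlt).trans hdi.symm.dvd).trans (hdvd (Or.inl rfl)))
  rw [← Ideal.mem_span_pair, hd, Ideal.mem_span_singleton]
  exact hdi.dvd.trans (pow_dvd_pow q hin)

variable {K V : Type*} [Field K] [AddCommGroup V] [Module K V]
  {g : LinearMap.BilinForm K V} {L : End K V}

theorem exists_apply_self_ne_zero [NeZero (2 : K)] (hs : g.IsSymm) (hg : g.Nondegenerate)
    {A : End K V} (hA : g.IsSelfAdjoint A) (hA0 : A ≠ 0) : ∃ x, g (A x) x ≠ 0 := by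
  by_contra! hzero
  have hsymm : LinearMap.BilinForm.IsSymm (g ∘ₗ A) := ⟨fun x y ↦ by
    rw [LinearMap.comp_apply, LinearMap.comp_apply, hA, hs.eq]⟩
  have hgA : g ∘ₗ A = 0 :=
    LinearMap.BilinForm.ext_of_isSymm hsymm LinearMap.BilinForm.isSymm_zero hzero
  exact hA0 <| LinearMap.ext fun x ↦ eq_of_forall_apply_eq hg <| by
    simpa using LinearMap.congr_fun (LinearMap.congr_fun hgA x)

theorem pow_succ_dvd_of_forall_apply_aeval_eq_zero (hL : g.IsSelfAdjoint L) {q b : K[X]} {n : ℕ}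
    (hq : Irreducible q) {e : V} (hqe : aeval L (q ^ (n + 1)) e = 0)
    (hge : g (aeval L (q ^ n) e) e ≠ 0)
    (hb : ∀ B ∈ Algebra.adjoin K {L}, g (aeval L b e) (B e) = 0) : q ^ (n + 1) ∣ b := by
  by_contra hndvd
  obtain ⟨c, d, hcd⟩ := exists_mul_add_mul_pow_succ_eq_pow hq hndvd
  have hc : aeval L c ∈ Algebra.adjoin K {L} := aeval_mem_adjoin_singleton K L
  refine hge ?_
  calc g (aeval L (q ^ n) e) e = g (aeval L c (aeval L b e)) e := by
        rw [← hcd, map_add, map_mul, map_mul, LinearMap.add_apply, Module.End.mul_apply,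
          Module.End.mul_apply, hqe, map_zero, add_zero]
    _ = 0 := by rw [isSelfAdjoint_of_mem_adjoin hL hc, hb _ hc]

theorem aeval_pow_mul_ne_zero_of_pow_succ_dvd_minpoly {A : Type*} [Ring A] [Algebra K A] {a : A}
    {q ε : K[X]} {n : ℕ} (hq : Irreducible q) (hqa : q ^ (n + 1) ∣ minpoly K a)
    (hqε : q ^ (n + 1) ∣ 1 - ε) : aeval a (q ^ n * ε) ≠ 0 := by
  intro hzero
  have hdvd : q ^ n * q ∣ q ^ n * ε := pow_succ q n ▸ hqa.trans (minpoly.dvd K a hzero)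
  have hq_dvd : q ∣ ε := (mul_dvd_mul_iff_left (pow_ne_zero n hq.ne_zero)).1 hdvd
  have hq_one : q ∣ 1 - ε + ε := dvd_add ((dvd_pow_self q n.succ_ne_zero).trans hqε) hq_dvd
  exact hq.not_isUnit (isUnit_of_dvd_one (by simpa using hq_one))

/-- The idempotent `E` projects onto a primary component of `L`, and `e` lies in that component.
Nondegeneracy of `g` on `K[L] e` reduces to `g(s e, e) ≠ 0` for one generator `s` of the socle of
the local ring `K[L] E`. -/
theorem exists_idempotent_and_vector [NeZero (2 : K)] [FiniteDimensional K V] [Nontrivial V]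
    (hs : g.IsSymm) (hg : g.Nondegenerate) (hL : g.IsSelfAdjoint L) :
    ∃ E ∈ Algebra.adjoin K {L}, ∃ e : V, e ≠ 0 ∧ E * E = E ∧ E e = e ∧
      ∀ A ∈ Algebra.adjoin K {L}, (∀ B ∈ Algebra.adjoin K {L}, g (A e) (B e) = 0) →
        A * E = 0 := by
  obtain ⟨q, ε, n, hq, hqL, hLε, hqε⟩ := exists_irreducible_pow_dvd_and_idempotent
    (minpoly.ne_zero_of_finite K L) (minpoly.not_isUnit K L)
  have hE : aeval L ε ∈ Algebra.adjoin K {L} := aeval_mem_adjoin_singleton K L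
  have hzero {p : K[X]} (hp : q ^ (n + 1) ∣ p) : aeval L p * aeval L ε = 0 := by
    rw [← map_mul, ← minpoly.dvd_iff]
    exact hLε.trans (mul_dvd_mul_right hp ε)
  have hEE : aeval L ε * aeval L ε = aeval L ε := by
    have hsub := hzero hqε
    rwa [map_sub, map_one, sub_mul, one_mul, sub_eq_zero, eq_comm] at hsub
  obtain ⟨x, hx⟩ := exists_apply_self_ne_zero hs hg
    (isSelfAdjoint_of_mem_adjoin hL (aeval_mem_adjoin_singleton K L))
    (aeval_pow_mul_ne_zero_of_pow_succ_dvd_minpoly hq hqL hqε)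
  have hge : g (aeval L (q ^ n) (aeval L ε x)) (aeval L ε x) ≠ 0 := by
    have hcomm : aeval L ε * aeval L (q ^ n) * aeval L ε = aeval L (q ^ n * ε) := by
      rw [← map_mul, mul_comm ε, map_mul, mul_assoc, hEE]
    rwa [← isSelfAdjoint_of_mem_adjoin hL hE, ← Module.End.mul_apply, ← Module.End.mul_apply,
      hcomm]
  refine ⟨aeval L ε, hE, aeval L ε x, fun he ↦ hge (by rw [he, map_zero]), hEE,
    LinearMap.congr_fun hEE x, fun A hA hAe ↦ ?_⟩
  obtain ⟨b, rfl⟩ := Algebra.adjoin_singleton_eq_range_aeval K L ▸ hA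
  exact hzero (pow_succ_dvd_of_forall_apply_aeval_eq_zero hL hq
    (LinearMap.congr_fun (hzero dvd_rfl) x) hge hAe)

theorem exists_orthogonal_coefficient_map [FiniteDimensional K V] (hs : g.IsSymm)
    {S : Submodule K (End K V)} {e : V}
    (hS : ∀ A ∈ S, (∀ B ∈ S, g (A e) (B e) = 0) → A = 0) :
    ∃ τ : V →ₗ[K] End K V, (∀ v, τ v ∈ S) ∧ ∀ v, ∀ B ∈ S, g (τ v e) (B e) = g v (B e) := by
  let ev : S →ₗ[K] V := LinearMap.applyₗ e ∘ₗ S.subtype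
  let gS : LinearMap.BilinForm K S := g.compl₁₂ ev ev
  have hgS_symm : gS.IsSymm := ⟨fun A B ↦ hs.eq (ev A) (ev B)⟩
  have hgS : gS.Nondegenerate :=
    (LinearMap.IsRefl.nondegenerate_iff_separatingLeft hgS_symm.isRefl).2
      fun A hA ↦ Subtype.ext (hS A A.2 fun B hB ↦ hA ⟨B, hB⟩)
  let τ : V →ₗ[K] S := (gS.toDual hgS).symm.toLinearMap ∘ₗ g.compl₂ ev
  have hτ (v : V) (B : S) : gS (τ v) B = g v (ev B) := by simp [τ]
  exact ⟨S.subtype ∘ₗ τ, fun v ↦ (τ v).2, fun v B hB ↦ hτ v ⟨B, hB⟩⟩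

theorem exists_isCyclicSplitting [NeZero (2 : K)] [FiniteDimensional K V] [Nontrivial V]
    (hs : g.IsSymm) (hg : g.Nondegenerate) (hL : g.IsSelfAdjoint L) :
    ∃ (e : V) (τ : V →ₗ[K] End K V), e ≠ 0 ∧ IsCyclicSplitting g L e τ := by
  obtain ⟨E, hE, e, he, hEE, hEe, hort⟩ := exists_idempotent_and_vector hs hg hL
  let S : Submodule K (End K V) := (Algebra.adjoin K {L}).toSubmodule ⊓
    LinearMap.eqLocus (LinearMap.mulRight K E) LinearMap.id
  have hS {A : End K V} (hA : A ∈ S) (hA0 : ∀ B ∈ S, g (A e) (B e) = 0) : A = 0 := by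
    rw [← show A * E = A from hA.2]
    refine hort A hA.1 fun B hB ↦ ?_
    have hBE : B * E ∈ S := ⟨(Algebra.adjoin K {L}).mul_mem hB hE, by simp [mul_assoc, hEE]⟩
    simpa [hEe] using hA0 (B * E) hBE
  obtain ⟨τ, hτS, hτ⟩ := exists_orthogonal_coefficient_map hs fun A hA ↦ hS hA
  have hτ_unique {A : End K V} {v : V} (hA : A ∈ S) (hAv : ∀ B ∈ S, g (A e) (B e) = g v (B e)) :
      τ v = A :=
    sub_eq_zero.1 <| hS (sub_mem (hτS v) hA) fun B hB ↦ by simp [hτ v B hB, hAv B hB]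
  have hL_mem : L ∈ Algebra.adjoin K {L} := Algebra.self_mem_adjoin_singleton K L
  have hL_mul {A : End K V} (hA : A ∈ S) : L * A ∈ S :=
    ⟨(Algebra.adjoin K {L}).mul_mem hL_mem hA.1, by simpa [mul_assoc] using congrArg (L * ·) hA.2⟩
  have hτe : τ e = E := hτ_unique ⟨hE, hEE⟩ fun B _ ↦ by rw [hEe]
  refine ⟨e, τ, he, fun v ↦ (hτS v).1, fun v ↦ ?_, fun u v ↦ ?_, by rw [hτe, hEe], fun v ↦ ?_⟩
  · refine hτ_unique (hL_mul (hτS v)) fun B hB ↦ ?_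
    rw [Module.End.mul_apply, hL, hL, ← Module.End.mul_apply, hτ v _ (hL_mul hB)]
  · calc g (τ u e) v = g (τ v e) (τ u e) := by rw [hτ v _ (hτS u), hs.eq]
      _ = g u (τ v e) := by rw [hs.eq, hτ u _ (hτS v)]
  · rw [hτe]
    exact (hτS v).2

end Existence

theorem stmt8_general {K V : Type*} [Field K] [NeZero (2 : K)] [AddCommGroup V] [Module K V]
    [FiniteDimensional K V] {g : LinearMap.BilinForm K V} (hs : g.IsSymm) (hg : g.Nondegenerate)
    {L : End K V} (hL : g.IsSelfAdjoint L) :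
    ∃ R : V →ₗ[K] V →ₗ[K] End K V, IsCurvatureTensor R ∧
      Submodule.span K {A | ∃ u v, R u v = A} = skewCentralizer g L := by
  induction hd : finrank K V using Nat.strong_induction_on generalizing V with
  | _ d ih =>
    obtain _ | _ := subsingleton_or_nontrivial V
    · exact ⟨0, .zero, Subsingleton.elim _ _⟩
    obtain ⟨e, τ, he, h⟩ := exists_isCyclicSplitting hs hg hL
    obtain ⟨R, hR, hspan⟩ := ih _ (hd ▸ h.finrank_ker_lt he) (hs.restrict _)
      (h.nondegenerate_restrict_ker hs hg) (L := L.restrict h.mapsTo_ker)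
      (fun x y ↦ hL x y) rfl
    refine ⟨h.extendTensor hg R, h.isCurvatureTensor_extendTensor hs hg hL hR, le_antisymm ?_
      (h.skewCentralizer_le_span_extendTensor hs hg hL hspan.ge)⟩
    rw [Submodule.span_le]
    rintro _ ⟨u, v, rfl⟩
    exact h.extendTensor_mem_skewCentralizer hs hg hL
      (fun x y ↦ hspan ▸ Submodule.subset_span ⟨x, y, rfl⟩) u v

/-- For any `g`-symmetric endomorphism `L` of `V`, there exists a formal
curvature tensor `R` on `V`, all of whose values lie in `𝔤_L`, such that the values
`{R(u,v)}` span `𝔤_L` as a vector space.  Consequently, `𝔤_L` is a Berger algebra. -/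
theorem stmt8 (V : Type*) [AddCommGroup V] [Module ℝ V] [FiniteDimensional ℝ V]
    (g : LinearMap.BilinForm ℝ V) (hg_symm : ∀ u v : V, g u v = g v u)
    (hg_nd : g.Nondegenerate)
    (L : Module.End ℝ V)
    (hL : ∀ u v : V, g (L u) v = g u (L v)) :
    (∃ R : V → V → Module.End ℝ V, IsFormalCurvature R ∧
        (∀ u v : V, R u v ∈ {X : Module.End ℝ V |
            (∀ x y : V, g (X x) y = - g x (X y)) ∧ X * L = L * X}) ∧
        (Submodule.span ℝ {A : Module.End ℝ V | ∃ u v : V, R u v = A} :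
            Set (Module.End ℝ V)) =
          {X : Module.End ℝ V |
            (∀ x y : V, g (X x) y = - g x (X y)) ∧ X * L = L * X}) ∧
      IsBerger {X : Module.End ℝ V |
          (∀ x y : V, g (X x) y = - g x (X y)) ∧ X * L = L * X} := by
  have hmem : {X : Module.End ℝ V | (∀ x y : V, g (X x) y = - g x (X y)) ∧ X * L = L * X} =
      (skewCentralizer g L : Set (End ℝ V)) := Set.ext fun _ ↦ mem_skewCentralizer.symm
  obtain ⟨R, hR, hspan⟩ := stmt8_general ⟨hg_symm⟩ hg_nd hL
  rw [hmem, ← hspan]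
  exact ⟨⟨fun u v ↦ R u v, hR.isFormalCurvature,
    fun u v ↦ Submodule.subset_span ⟨u, v, rfl⟩, rfl⟩, hR.isFormalCurvature.isBerger_span⟩
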